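/- Let m be a natural number, let Y be a real normed vector space, and let φ : Y → ℝⁿ be a C^∞-smooth map (modeling the orbit map g ↦ g(x₀) of a Lie group acting smoothly by diffeomorphisms on the domain). Suppose ι is a C^{m,γ}-embedding with constant C. Then the map Φ : Y × X → ℝ defined by Φ(g, f) = f̂(φ(g)) is of class C^m. -/

import Mathlib

/-!
The evaluation functionals `δ x : f ↦ f̂ x` depend on `x` in a `C^m` way, as a map from `ℝⁿ` into
the dual of `X` with its *operator norm*. The claim follows, since `Φ (g, f) = δ (φ g) f` is the
composition of `δ ∘ φ` with the bounded bilinear pairing between `X` and its dual.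

That `δ` is `C^m` is proved by induction on `m` in `contDiff_of_holder_family`, for families of
bounded operators `δ x : X →L[ℝ] F` with arbitrary target `F`. For `m = 0` the Hölder estimate,
uniform over the unit ball of `X`, is norm continuity. For the inductive step the family
`δ' x : f ↦ D f̂ x` satisfies the same hypotheses with `m` in place of `m + 1`, hence is `C^m` and
in particular norm continuous; by the mean value inequality, uniformly in `f`, `δ` is then
differentiable with derivative `δ'` up to swapping arguments (`hasFDerivAt_of_pointwise`).
-/

/-- `ι : X →ₗ[ℝ] ((Fin n → ℝ) → ℝ)` is a `C^{m,γ}`-embedding with constant `C`: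
for every `f : X` the function `f̂ = ι f` is `m`-times continuously differentiable,
all iterated derivatives up to order `m` are bounded by `C‖f‖`, and the `m`-th
iterated derivative is `γ`-Hölder with constant `C‖f‖`. -/
def IsCmGammaEmbedding {X : Type*} [NormedAddCommGroup X] [NormedSpace ℝ X]
    (n : ℕ) (ι : X →ₗ[ℝ] ((Fin n → ℝ) → ℝ)) (m : ℕ) (γ C : ℝ) : Prop :=
  ∀ f : X,
    ContDiff ℝ m (ι f) ∧
    (∀ i : ℕ, i ≤ m → ∀ x : Fin n → ℝ, ‖iteratedFDeriv ℝ i (ι f) x‖ ≤ C * ‖f‖) ∧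
    ∀ x y : Fin n → ℝ,
      ‖iteratedFDeriv ℝ m (ι f) x - iteratedFDeriv ℝ m (ι f) y‖ ≤ C * ‖f‖ * ‖x - y‖ ^ γ

/-- A family of operators whose orbits `x ↦ δ x f` have derivatives `δ' x f` is differentiable in
operator norm wherever `δ'` is norm continuous. -/
lemma hasFDerivAt_of_pointwise {X E F : Type*}
    [NormedAddCommGroup X] [NormedSpace ℝ X] [NormedAddCommGroup E] [NormedSpace ℝ E]
    [NormedAddCommGroup F] [NormedSpace ℝ F]
    (δ : E → X →L[ℝ] F) (δ' : E → X →L[ℝ] E →L[ℝ] F)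
    (h : ∀ f x, HasFDerivAt (fun y => δ y f) (δ' x f) x) {x : E} (hc : ContinuousAt δ' x) :
    HasFDerivAt δ (δ' x).flip x := by
  rw [hasFDerivAt_iff_isLittleO, Asymptotics.isLittleO_iff]
  intro ε hε
  obtain ⟨r, hr, hball⟩ := (Metric.continuousAt_iff (f := δ') (a := x)).1 hc ε hε
  filter_upwards [Metric.ball_mem_nhds x hr] with y hy
  refine ContinuousLinearMap.opNorm_le_bound _ (by positivity) fun f => ?_
  have key := (convex_ball x r).norm_image_sub_le_of_norm_hasFDerivWithin_le'
    (f := fun y => δ y f) (f' := fun z => δ' z f) (φ := δ' x f) (C := ε * ‖f‖)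
    (fun z _ => (h f z).hasFDerivWithinAt)
    (fun z hz => by
      have h1 := (δ' z - δ' x).le_opNorm f
      have h2 : ‖δ' z - δ' x‖ ≤ ε := (dist_eq_norm (δ' z) (δ' x)).ge.trans (hball hz).le
      exact h1.trans (by gcongr))
    (Metric.mem_ball_self hr) hy
  calc _ ≤ ε * ‖f‖ * ‖y - x‖ := by simpa using key
    _ = ε * ‖y - x‖ * ‖f‖ := by ring

/-- If the orbits `x ↦ δ x f` of a family of operators satisfy `C^{m,γ}` estimates uniformly for
`f` in the unit ball, then the family is `C^m` in operator norm. -/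
lemma contDiff_of_holder_family.{u, v} {X : Type v} {E : Type u}
    [NormedAddCommGroup X] [NormedSpace ℝ X] [NormedAddCommGroup E] [NormedSpace ℝ E]
    {γ C : ℝ} (hγ : 0 < γ) (hC : 0 ≤ C) (m : ℕ) :
    ∀ {F : Type u} [NormedAddCommGroup F] [NormedSpace ℝ F] (δ : E → X →L[ℝ] F),
      (∀ f, ContDiff ℝ m (fun x => δ x f)) →
      (∀ f, ∀ i ≤ m, ∀ x, ‖iteratedFDeriv ℝ i (fun x => δ x f) x‖ ≤ C * ‖f‖) →
      (∀ f x y, ‖iteratedFDeriv ℝ m (fun x => δ x f) x - iteratedFDeriv ℝ m (fun x => δ x f) y‖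
        ≤ C * ‖f‖ * ‖x - y‖ ^ γ) →
      ContDiff ℝ m δ := by
  induction m with
  | zero =>
    intro F _ _ δ _ _ hH
    rw [Nat.cast_zero, contDiff_zero, continuous_iff_continuousAt]
    intro x
    have hle : ∀ y, dist (δ y) (δ x) ≤ C * ‖y - x‖ ^ γ := fun y => by
      rw [dist_eq_norm]
      refine ContinuousLinearMap.opNorm_le_bound _ (by positivity) fun f => ?_
      have h1 := hH f y x
      simp only [iteratedFDeriv_zero_eq_comp, Function.comp_apply, ← map_sub,
        LinearIsometryEquiv.norm_map] at h1
      calc ‖(δ y - δ x) f‖ ≤ C * ‖f‖ * ‖y - x‖ ^ γ := by simpa using h1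
        _ = C * ‖y - x‖ ^ γ * ‖f‖ := by ring
    refine tendsto_iff_dist_tendsto_zero.2 (squeeze_zero (fun _ => dist_nonneg) hle ?_)
    have hcont : Continuous fun y : E => C * ‖y - x‖ ^ γ :=
      continuous_const.mul
        ((continuous_id.sub continuous_const).norm.rpow_const fun _ => Or.inr hγ.le)
    simpa [Real.zero_rpow hγ.ne'] using hcont.tendsto x
  | succ m ih =>
    intro F _ _ δ hd hb hH
    have hdiff : ∀ f, Differentiable ℝ (fun x => δ x f) := fun f =>
      (hd f).differentiable (by simp)
    have hbound : ∀ f x, ‖fderiv ℝ (fun x => δ x f) x‖ ≤ C * ‖f‖ := fun f x => by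
      simpa only [norm_iteratedFDeriv_one] using hb f 1 (by omega) x
    let δ' : E → X →L[ℝ] E →L[ℝ] F := fun x =>
      LinearMap.mkContinuous
        { toFun := fun f => fderiv ℝ (fun y => δ y f) x
          map_add' := fun f g => by
            simp only [map_add]
            exact fderiv_add (hdiff f x) (hdiff g x)
          map_smul' := fun c f => by
            simp only [map_smul]
            exact fderiv_const_smul (hdiff f x) c } C (hbound · x)
    have hδ' : ∀ f, (fun x => δ' x f) = fderiv ℝ (fun x => δ x f) := fun f => rfl
    have hsmooth : ContDiff ℝ m δ' := by
      refine ih δ' (fun f => ?_) (fun f i hi x => ?_) (fun f x y => ?_)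
      · rw [hδ']
        exact (hd f).fderiv_right (by norm_cast)
      · rw [hδ', norm_iteratedFDeriv_fderiv]
        exact hb f (i + 1) (by omega) x
      · have h1 := hH f x y
        simp only [iteratedFDeriv_succ_eq_comp_right, Function.comp_apply] at h1
        let e := (continuousMultilinearCurryRightEquiv' ℝ m E F).symm
        let A := iteratedFDeriv ℝ m (fderiv ℝ fun x => δ x f)
        calc _ = ‖e (A x - A y)‖ := (e.norm_map (A x - A y)).symm
          _ = ‖e (A x) - e (A y)‖ := congrArg norm (e.map_sub (A x) (A y))
          _ ≤ _ := h1
    rw [Nat.cast_succ]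
    refine contDiff_succ_iff_hasFDerivAt.2 ⟨fun x => (δ' x).flip, ?_, fun x => ?_⟩
    · exact (LinearIsometryEquiv.contDiff (E := X →L[ℝ] E →L[ℝ] F) (F := E →L[ℝ] X →L[ℝ] F)
        (ContinuousLinearMap.flipₗᵢ ℝ X E F)).comp hsmooth
    · exact hasFDerivAt_of_pointwise δ δ' (fun f x => (hdiff f x).hasFDerivAt)
        hsmooth.continuous.continuousAt

/-- If `φ : Y → ℝⁿ` is `C^∞`-smooth (modelling the orbit map of a Lie group acting
smoothly on the domain) and `ι` is a `C^{m,γ}`-embedding with constant `C`, then the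
map `Φ : Y × X → ℝ`, `Φ(g, f) = f̂(φ(g))`, is of class `C^m`. -/
theorem orbit_eval_contDiff {X : Type*} [NormedAddCommGroup X] [NormedSpace ℝ X]
    [CompleteSpace X]
    {Y : Type*} [NormedAddCommGroup Y] [NormedSpace ℝ Y]
    {n : ℕ} (hn : 0 < n) {γ C : ℝ} (hγ : 0 < γ) (hγ1 : γ < 1) (hC : 0 ≤ C)
    (ι : X →ₗ[ℝ] ((Fin n → ℝ) → ℝ)) (m : ℕ)
    (hemb : IsCmGammaEmbedding n ι m γ C)
    (φ : Y → Fin n → ℝ) (hφ : ContDiff ℝ (⊤ : ℕ∞) φ) :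
    ContDiff ℝ m (fun p : Y × X => ι p.2 (φ p.1)) := by
  let δ : (Fin n → ℝ) → X →L[ℝ] ℝ := fun x =>
    LinearMap.mkContinuous (LinearMap.proj x ∘ₗ ι) C fun f => by
      have h := (hemb f).2.1 0 (Nat.zero_le m) x
      rw [norm_iteratedFDeriv_zero] at h
      exact h
  have hδ : ContDiff ℝ m δ := contDiff_of_holder_family hγ hC m δ
    (fun f => (hemb f).1) (fun f => (hemb f).2.1) (fun f => (hemb f).2.2)
  have hφm : ContDiff ℝ m φ := hφ.of_le (by exact_mod_cast le_top)
  exact ((hδ.comp hφm).comp contDiff_fst).clm_apply contDiff_snd
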